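/- arXiv:1806.01226 — 3 statements merged into one kernel-verified Lean document; each statement's English description precedes it below -/
import Mathlib

section
/- (Barrier correctness of banded computation.) Let w be a positive integer with w > |n − m|, and suppose that every cell (i,j) with 0 ≤ i < n, 0 ≤ j < m and |i − j| = w satisfies dist(P i, Q j) > dF(P,Q). Then every traversal of minimum width is confined to the band of width w, and the band-restricted discrete Fréchet distance equals the discrete Fréchet distance: dF_w(P,Q) = dF(P,Q). -/
/-! Along a traversal, `|i - j|` starts at `0` and changes by at most one per step, so a traversal
that leaves the band must visit a cell with `|i - j| = w` exactly. By the barrier hypothesis such a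
cell costs more than `dF P Q`, hence no traversal of width `dF P Q` leaves the band
(`Traversal.inBand_of_width_le`). Widths are values of the finitely many distances
`dist (P i) (Q j)`, so the infimum `dF P Q` is attained (`exists_width_eq_dF`); the traversal
attaining it lies in the band, and this makes the two infima equal. -/

/-- A (parallel) traversal of two point sequences of lengths `n` and `m`:
a finite sequence of index pairs starting at `(0,0)`, ending at `(n-1,m-1)`,
each step advancing by `(1,0)`, `(0,1)` or `(1,1)`, with all indices valid. -/
structure Traversal (n m : ℕ) where
  k : ℕ
  c : Fin (k + 1) → ℕ × ℕ
  first : c 0 = (0, 0)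
  last : c (Fin.last k) = (n - 1, m - 1)
  step : ∀ t : Fin k,
    c t.succ = c t.castSucc + (1, 0) ∨
    c t.succ = c t.castSucc + (0, 1) ∨
    c t.succ = c t.castSucc + (1, 1)
  bound : ∀ t, (c t).1 < n ∧ (c t).2 < m

/-- The index into `P` at position `t` of the traversal. -/
def Traversal.pi {n m : ℕ} (T : Traversal n m) (t : Fin (T.k + 1)) : Fin n :=
  ⟨(T.c t).1, (T.bound t).1⟩

/-- The index into `Q` at position `t` of the traversal. -/
def Traversal.qj {n m : ℕ} (T : Traversal n m) (t : Fin (T.k + 1)) : Fin m :=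
  ⟨(T.c t).2, (T.bound t).2⟩

/-- The width of a traversal: the maximum distance `dist (P i) (Q j)`
over its pairs `(i,j)`. -/
noncomputable def Traversal.width {d n m : ℕ} (T : Traversal n m)
    (P : Fin n → EuclideanSpace ℝ (Fin d)) (Q : Fin m → EuclideanSpace ℝ (Fin d)) : ℝ :=
  Finset.univ.sup' Finset.univ_nonempty fun t : Fin (T.k + 1) =>
    dist (P (T.pi t)) (Q (T.qj t))

/-- The discrete Fréchet distance: the minimum width over all traversals. -/
noncomputable def dF {d n m : ℕ} (P : Fin n → EuclideanSpace ℝ (Fin d))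
    (Q : Fin m → EuclideanSpace ℝ (Fin d)) : ℝ :=
  ⨅ T : Traversal n m, T.width P Q

/-- A traversal is confined to the band of width `w` if all of its pairs `(i,j)`
satisfy `|i - j| < w` (indices viewed as integers). -/
def Traversal.InBand {n m : ℕ} (T : Traversal n m) (w : ℕ) : Prop :=
  ∀ t, |((T.c t).1 : ℤ) - ((T.c t).2 : ℤ)| < (w : ℤ)

/-- The band-restricted discrete Fréchet distance: the minimum width over all
traversals confined to the band of width `w`. -/
noncomputable def dFBand {d n m : ℕ} (w : ℕ) (P : Fin n → EuclideanSpace ℝ (Fin d))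
    (Q : Fin m → EuclideanSpace ℝ (Fin d)) : ℝ :=
  ⨅ T : {T : Traversal n m // T.InBand w}, T.1.width P Q


/-- The traversal that first runs through all of `P` and then through all of `Q`. -/
def Traversal.lShaped {n m : ℕ} (hn : 1 ≤ n) (hm : 1 ≤ m) : Traversal n m where
  k := (n - 1) + (m - 1)
  c t := (min (t : ℕ) (n - 1), (t : ℕ) - (n - 1))
  first := by simp
  last := by simp
  step t := by
    simp only [Fin.val_succ, Fin.val_castSucc, Prod.mk_add_mk, Prod.mk.injEq]
    omega
  bound t := by
    have := t.isLt
    dsimp only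
    omega

theorem Traversal.dist_le_width {d n m : ℕ} (T : Traversal n m)
    (P : Fin n → EuclideanSpace ℝ (Fin d)) (Q : Fin m → EuclideanSpace ℝ (Fin d))
    (t : Fin (T.k + 1)) : dist (P (T.pi t)) (Q (T.qj t)) ≤ T.width P Q :=
  Finset.le_sup' (fun t => dist (P (T.pi t)) (Q (T.qj t))) (Finset.mem_univ t)

theorem Traversal.width_nonneg {d n m : ℕ} (T : Traversal n m)
    (P : Fin n → EuclideanSpace ℝ (Fin d)) (Q : Fin m → EuclideanSpace ℝ (Fin d)) :
    0 ≤ T.width P Q :=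
  dist_nonneg.trans (T.dist_le_width P Q 0)

/-- The infimum defining the discrete Fréchet distance is attained, because the widths of
traversals take only finitely many values. -/
theorem exists_width_eq_dF {d n m : ℕ} (hn : 1 ≤ n) (hm : 1 ≤ m)
    (P : Fin n → EuclideanSpace ℝ (Fin d)) (Q : Fin m → EuclideanSpace ℝ (Fin d)) :
    ∃ T : Traversal n m, T.width P Q = dF P Q := by
  have hfin : (Set.range fun T : Traversal n m => T.width P Q).Finite := by
    refine (Set.finite_range fun p : Fin n × Fin m => dist (P p.1) (Q p.2)).subset ?_
    rintro _ ⟨T, rfl⟩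
    obtain ⟨t, -, ht⟩ := Finset.exists_mem_eq_sup' Finset.univ_nonempty
      fun t : Fin (T.k + 1) => dist (P (T.pi t)) (Q (T.qj t))
    exact ⟨(T.pi t, T.qj t), ht.symm⟩
  have : Nonempty (Traversal n m) := ⟨Traversal.lShaped hn hm⟩
  exact (Set.range_nonempty _).csInf_mem hfin

/-- A traversal whose width is below every distance on the barrier `|i - j| = w` cannot cross it. -/
theorem Traversal.inBand_of_width_le {d n m w : ℕ} {r : ℝ}
    {P : Fin n → EuclideanSpace ℝ (Fin d)} {Q : Fin m → EuclideanSpace ℝ (Fin d)} (hw : 0 < w)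
    (hbarrier : ∀ (i : Fin n) (j : Fin m),
      |((i : ℕ) : ℤ) - ((j : ℕ) : ℤ)| = (w : ℤ) → r < dist (P i) (Q j))
    (T : Traversal n m) (hT : T.width P Q ≤ r) : T.InBand w := by
  intro t
  induction t using Fin.induction with
  | zero => simpa [T.first] using hw
  | succ t ih =>
    have hne : |((T.c t.succ).1 : ℤ) - ((T.c t.succ).2 : ℤ)| ≠ (w : ℤ) := fun h =>
      ((hbarrier (T.pi t.succ) (T.qj t.succ) h).trans_le
        ((T.dist_le_width P Q t.succ).trans hT)).false
    have hle : |((T.c t.succ).1 : ℤ) - ((T.c t.succ).2 : ℤ)| ≤ (w : ℤ) := by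
      rw [abs_lt] at ih
      rw [abs_le]
      rcases T.step t with h | h | h <;> rw [h] <;>
        simp only [Prod.fst_add, Prod.snd_add] <;> omega
    exact lt_of_le_of_ne hle hne

theorem band_barrier_correctness (d n m : ℕ) (hn : 1 ≤ n) (hm : 1 ≤ m)
    (P : Fin n → EuclideanSpace ℝ (Fin d)) (Q : Fin m → EuclideanSpace ℝ (Fin d))
    (w : ℕ) (hw : 0 < w) (hband : |(n : ℤ) - (m : ℤ)| < (w : ℤ))
    (hbarrier : ∀ (i : Fin n) (j : Fin m),
      |((i : ℕ) : ℤ) - ((j : ℕ) : ℤ)| = (w : ℤ) → dF P Q < dist (P i) (Q j)) :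
    (∀ T : Traversal n m, T.width P Q = dF P Q → T.InBand w) ∧
    dFBand w P Q = dF P Q := by
  have hmin : ∀ T : Traversal n m, T.width P Q = dF P Q → T.InBand w :=
    fun T hT => T.inBand_of_width_le hw hbarrier hT.le
  refine ⟨hmin, ?_⟩
  obtain ⟨T, hT⟩ := exists_width_eq_dF hn hm P Q
  apply le_antisymm
  · rw [← hT]
    exact ciInf_le (f := fun S : {S : Traversal n m // S.InBand w} => S.1.width P Q)
      ⟨0, by rintro _ ⟨S, rfl⟩; exact S.1.width_nonneg P Q⟩ ⟨T, hmin T hT⟩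
  · -- The band contains a traversal, so the restricted infimum is not the junk value `0`.
    have : Nonempty {S : Traversal n m // S.InBand w} := ⟨⟨T, hmin T hT⟩⟩
    exact le_ciInf fun S => ciInf_le (f := fun S : Traversal n m => S.width P Q)
      ⟨0, by rintro _ ⟨S, rfl⟩; exact S.width_nonneg P Q⟩ S.1
end

section
/- (Combined band-and-threshold correctness, final iteration of the adaptive algorithm.) Let w be a positive integer with w > |n − m| and let t be a real number with t > dF(P,Q). Suppose every cell (i,j) with |i − j| = w satisfies dist(P i, Q j) ≥ t. Then the minimum width over all traversals that are confined to the band of width w and all of whose pairs (i,j) satisfy dist(P i, Q j) < t equals dF(P,Q). -/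
theorem Traversal.width_lt_iff {d n m : ℕ} (T : Traversal n m)
    (P : Fin n → EuclideanSpace ℝ (Fin d)) (Q : Fin m → EuclideanSpace ℝ (Fin d)) (t : ℝ) :
    T.width P Q < t ↔ ∀ s, dist (P (T.pi s)) (Q (T.qj s)) < t := by
  simp [Traversal.width, Finset.sup'_lt_iff]

/-- A traversal staying below the threshold `t` cannot cross the barrier `|i - j| = w`, by
discrete continuity of `i - j` along the traversal. -/
theorem Traversal.inBand_of_dist_lt {d n m : ℕ} (T : Traversal n m)
    (P : Fin n → EuclideanSpace ℝ (Fin d)) (Q : Fin m → EuclideanSpace ℝ (Fin d))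
    {w : ℕ} (hw : 0 < w) {t : ℝ}
    (hbarrier : ∀ (i : Fin n) (j : Fin m),
      |((i : ℕ) : ℤ) - ((j : ℕ) : ℤ)| = (w : ℤ) → t ≤ dist (P i) (Q j))
    (hT : ∀ s, dist (P (T.pi s)) (Q (T.qj s)) < t) : T.InBand w := by
  intro s
  induction s using Fin.induction with
  | zero => simpa [T.first] using hw
  | succ s ih =>
    have hne : |((T.c s.succ).1 : ℤ) - ((T.c s.succ).2 : ℤ)| ≠ (w : ℤ) := fun h =>
      (hT s.succ).not_ge (hbarrier (T.pi s.succ) (T.qj s.succ) h)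
    have hle : |((T.c s.succ).1 : ℤ) - ((T.c s.succ).2 : ℤ)| ≤ (w : ℤ) := by
      rw [abs_lt] at ih
      rw [abs_le]
      rcases T.step s with h | h | h <;> rw [h] <;>
        simp only [Prod.fst_add, Prod.snd_add] <;> push_cast <;> omega
    exact lt_of_le_of_ne hle hne

theorem band_threshold_correctness (d n m : ℕ) (hn : 1 ≤ n) (hm : 1 ≤ m)
    (P : Fin n → EuclideanSpace ℝ (Fin d)) (Q : Fin m → EuclideanSpace ℝ (Fin d))
    (w : ℕ) (hw : 0 < w) (hband : |(n : ℤ) - (m : ℤ)| < (w : ℤ))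
    (t : ℝ) (ht : dF P Q < t)
    (hbarrier : ∀ (i : Fin n) (j : Fin m),
      |((i : ℕ) : ℤ) - ((j : ℕ) : ℤ)| = (w : ℤ) → t ≤ dist (P i) (Q j)) :
    (⨅ T : {T : Traversal n m //
        T.InBand w ∧ ∀ s, dist (P (T.pi s)) (Q (T.qj s)) < t},
      T.1.width P Q) = dF P Q := by
  have bdd : BddBelow (Set.range fun T : Traversal n m => T.width P Q) :=
    ⟨0, by rintro _ ⟨T, rfl⟩; exact T.width_nonneg P Q⟩
  have bdd' : BddBelow (Set.range fun T : {T : Traversal n m //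
      T.InBand w ∧ ∀ s, dist (P (T.pi s)) (Q (T.qj s)) < t} => T.1.width P Q) :=
    ⟨0, by rintro _ ⟨T, rfl⟩; exact T.1.width_nonneg P Q⟩
  rcases isEmpty_or_nonempty (Traversal n m) with hE | hE
  -- With no traversals at all, both infima are over empty families and agree by convention;
  -- this saves exhibiting a traversal for `n, m ≥ 1`.
  · simp [dF, Real.iInf_of_isEmpty]
  have le_of_lt : ∀ T : Traversal n m, T.width P Q < t →
      (⨅ T : {T : Traversal n m //
        T.InBand w ∧ ∀ s, dist (P (T.pi s)) (Q (T.qj s)) < t}, T.1.width P Q) ≤ T.width P Q := by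
    intro T hT
    have hT' := (T.width_lt_iff P Q t).1 hT
    exact ciInf_le bdd' ⟨T, T.inBand_of_dist_lt P Q hw hbarrier hT', hT'⟩
  obtain ⟨T₀, hT₀⟩ := exists_lt_of_ciInf_lt (show (⨅ T : Traversal n m, T.width P Q) < t from ht)
  have hT₀' := (T₀.width_lt_iff P Q t).1 hT₀
  apply le_antisymm
  · refine le_ciInf fun T => ?_
    rcases lt_or_ge (T.width P Q) t with hT | hT
    · exact le_of_lt T hT
    · exact (le_of_lt T₀ hT₀).trans (hT₀.le.trans hT)
  · haveI : Nonempty {T : Traversal n m //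
        T.InBand w ∧ ∀ s, dist (P (T.pi s)) (Q (T.qj s)) < t} :=
      ⟨⟨T₀, T₀.inBand_of_dist_lt P Q hw hbarrier hT₀', hT₀'⟩⟩
    exact le_ciInf fun T => ciInf_le bdd T.1
end

section
/- (Long-edged instances have certificate width 1.) Suppose n = m, let D = max over i ∈ Fin n of dist(P i, Q i), and suppose dist(P i, P (i+1)) > 2D and dist(Q i, Q (i+1)) > 2D for all 0 ≤ i < n−1. Then every off-diagonal cell adjacent to the diagonal has distance exceeding D: for all indices i, j with |i − j| = 1, dist(P i, Q j) > D. Consequently every traversal of P and Q other than the diagonal traversal has width strictly greater than D. -/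
/-- Discrete intermediate value property: a traversal that leaves the diagonal does so through
a cell adjacent to it. -/
theorem Traversal.exists_adjacent {n m : ℕ} (T : Traversal n m)
    (h : ∃ s, (T.c s).1 ≠ (T.c s).2) :
    ∃ t, |((T.c t).1 : ℤ) - ((T.c t).2 : ℤ)| = 1 := by
  by_contra! hne
  obtain ⟨s, hs⟩ := h
  refine hs ?_
  induction s using Fin.induction with
  | zero => simp [T.first]
  | succ t ih =>
    by_contra hd
    have ht : (T.c t.castSucc).1 = (T.c t.castSucc).2 := by
      by_contra hc
      exact hc (ih hc)
    apply hne t.succ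
    rcases T.step t with h | h | h <;> simp_all

theorem long_edged_certificate_width_one (d n : ℕ) (hn : 1 ≤ n)
    (P Q : Fin n → EuclideanSpace ℝ (Fin d)) (D : ℝ)
    (hD : D = Finset.univ.sup' ⟨⟨0, hn⟩, Finset.mem_univ _⟩
      (fun i : Fin n => dist (P i) (Q i)))
    (hP : ∀ i : ℕ, (hi : i + 1 < n) → 2 * D < dist (P ⟨i, by omega⟩) (P ⟨i + 1, hi⟩))
    (hQ : ∀ i : ℕ, (hi : i + 1 < n) → 2 * D < dist (Q ⟨i, by omega⟩) (Q ⟨i + 1, hi⟩)) :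
    (∀ (i j : Fin n), |((i : ℕ) : ℤ) - ((j : ℕ) : ℤ)| = 1 → D < dist (P i) (Q j)) ∧
    (∀ T : Traversal n n, (∃ s, (T.c s).1 ≠ (T.c s).2) → D < T.width P Q) := by
  have hDi : ∀ i, dist (P i) (Q i) ≤ D := fun i => by
    rw [hD]
    exact Finset.le_sup' (fun i : Fin n => dist (P i) (Q i)) (Finset.mem_univ i)
  have hadj : ∀ (i j : Fin n), |((i : ℕ) : ℤ) - ((j : ℕ) : ℤ)| = 1 →
      D < dist (P i) (Q j) := by
    intro i j hij
    have hedge : 2 * D < dist (P i) (P j) := by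
      obtain ⟨i, hi⟩ := i
      obtain ⟨j, hj⟩ := j
      rcases (abs_eq zero_le_one).1 hij with h | h
      · obtain rfl : i = j + 1 := by simp only at h; omega
        rw [dist_comm]
        exact hP j hi
      · obtain rfl : j = i + 1 := by simp only at h; omega
        exact hP i hj
    have htri := dist_triangle_right (P i) (P j) (Q j)
    linarith [hDi j]
  refine ⟨hadj, fun T hT => ?_⟩
  obtain ⟨t, ht⟩ := T.exists_adjacent hT
  exact (hadj (T.pi t) (T.qj t) ht).trans_le
    (Finset.le_sup' (fun t => dist (P (T.pi t)) (Q (T.qj t))) (Finset.mem_univ t))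
end
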